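/- Let α and β be real numbers with 0 < α < 1 and 0 < β < 1. For real y > 2, define F(y) as the value of the continued fraction y/2 + K_{m=1}^∞(a_m/b_m(y)), where for m ≥ 1: a_{2m} = (2m−α−β)(2m−α)(2m−β)/4, a_{2m−1} = (2m−2+α+β)(2m−2+α)(2m−2+β)/4, b_{2m}(y) = y, b_{2m−1}(y) = (2m−1)(y+2(1−α−β)). Then for every real x > 2, the continued fractions defining F(x) and F(x+2) converge to positive real values, and F(x)/F(x+2) = (x+2−α−2β)·x·(x+2−2α−β) / [(x+2−α)(x+2−2α−2β)(x+2−β)]. -/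

import Mathlib

open Filter

noncomputable def cfA (a b : ℕ → ℝ) : ℕ → ℝ
  | 0 => 1
  | 1 => b 0
  | n + 2 => b (n + 1) * cfA a b (n + 1) + a (n + 1) * cfA a b n

noncomputable def cfB (a b : ℕ → ℝ) : ℕ → ℝ
  | 0 => 0
  | 1 => 1
  | n + 2 => b (n + 1) * cfB a b (n + 1) + a (n + 1) * cfB a b n

/-- The continued fraction `b 0 + K_{n=1}^∞ (a n / b n)` converges to `v`. -/
def CFConvergesTo (a b : ℕ → ℝ) (v : ℝ) : Prop :=
  (∀ᶠ n in atTop, cfB a b n ≠ 0) ∧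
    Tendsto (fun n => cfA a b n / cfB a b n) atTop (nhds v)
/-- `a_{2m} = (2m−α−β)(2m−α)(2m−β)/4`, `a_{2m−1} = (2m−2+α+β)(2m−2+α)(2m−2+β)/4`. -/
noncomputable def aSeq (α β : ℝ) : ℕ → ℝ := fun n =>
  if n % 2 = 0 then
    ((n : ℝ) - α - β) * ((n : ℝ) - α) * ((n : ℝ) - β) / 4
  else
    ((n : ℝ) - 1 + α + β) * ((n : ℝ) - 1 + α) * ((n : ℝ) - 1 + β) / 4

/-- `b_0 = y/2`, `b_{2m}(y) = y`, `b_{2m−1}(y) = (2m−1)(y+2(1−α−β))`. -/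
noncomputable def bSeq (α β : ℝ) (y : ℝ) : ℕ → ℝ := fun n =>
  if n = 0 then y / 2
  else if n % 2 = 0 then y else (n : ℝ) * (y + 2 * (1 - α - β))


theorem cfB_pos (a b : ℕ → ℝ) (ha : ∀ n, 0 < a (n + 1)) (hb : ∀ n, 0 < b n) :
    ∀ n, 0 < cfB a b (n + 1) ∧ 0 < cfB a b (n + 2) := by
  intro n
  induction n with
  | zero =>
    have := hb 1
    simp [cfB]
    exact this
  | succ k ih =>
    refine ⟨ih.2, ?_⟩
    have h1 := mul_pos (hb (k + 2)) ih.2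
    have h2 := mul_pos (ha (k + 1)) ih.1
    show 0 < b (k + 2) * cfB a b (k + 2) + a (k + 2) * cfB a b (k + 1)
    linarith

theorem cfA_ge (a b : ℕ → ℝ) (ha : ∀ n, 0 < a (n + 1)) (hb : ∀ n, 0 < b n) :
    ∀ n, b 0 * cfB a b n ≤ cfA a b n ∧ b 0 * cfB a b (n + 1) ≤ cfA a b (n + 1) := by
  intro n
  induction n with
  | zero => simp [cfB, cfA]
  | succ k ih =>
    refine ⟨ih.2, ?_⟩
    have h1 := mul_le_mul_of_nonneg_left ih.2 (hb (k + 1)).le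
    have h2 := mul_le_mul_of_nonneg_left ih.1 (ha k).le
    show b 0 * (b (k + 1) * cfB a b (k + 1) + a (k + 1) * cfB a b k) ≤
      b (k + 1) * cfA a b (k + 1) + a (k + 1) * cfA a b k
    linarith

theorem cf_det (a b : ℕ → ℝ) (n : ℕ) :
    cfA a b (n + 2) * cfB a b (n + 1) - cfA a b (n + 1) * cfB a b (n + 2) =
      (-1) ^ n * ∏ i ∈ Finset.range (n + 1), a (i + 1) := by
  induction n with
  | zero => simp [cfA, cfB]; ring
  | succ k ih =>
    rw [Finset.prod_range_succ, pow_succ]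
    have e1 : cfA a b (k + 3) = b (k + 2) * cfA a b (k + 2) + a (k + 2) * cfA a b (k + 1) := rfl
    have e2 : cfB a b (k + 3) = b (k + 2) * cfB a b (k + 2) + a (k + 2) * cfB a b (k + 1) := rfl
    show cfA a b (k + 3) * cfB a b (k + 2) - cfA a b (k + 2) * cfB a b (k + 3) = _
    rw [e1, e2]
    linear_combination (-a (k + 2)) * ih

/-- absolute difference of consecutive approximants -/
noncomputable def cfH (a b : ℕ → ℝ) (n : ℕ) : ℝ :=
  (∏ i ∈ Finset.range (n + 1), a (i + 1)) / (cfB a b (n + 1) * cfB a b (n + 2))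

theorem cf_quad (a a' b b' p q e : ℝ) (ha : 0 < a) (ha' : 0 < a') (hb : 0 < b) (hb' : 0 < b')
    (hp : 0 < p) (hq : 0 < q) (he : 0 ≤ e) (h : e ^ 2 * a' ≤ 4 * (b' * b)) :
    a' * a * (p * q) * (1 + e) ≤ (b * q + a * p) * (b' * (b * q + a * p) + a' * q) := by
  set r := b * q + a * p with hr
  have hrp : a * p ≤ r := by have := mul_pos hb hq; linarith
  have hrpos : 0 < r := lt_of_lt_of_le (mul_pos ha hp) hrp
  have key : 0 ≤ b' * r ^ 2 + a' * b * q ^ 2 - e * a' * r * q := by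
    have h1 : 0 ≤ b' * (b' * r ^ 2 + a' * b * q ^ 2 - e * a' * r * q) := by
      have h2 := mul_le_mul_of_nonneg_right h (by positivity : 0 ≤ a' * q ^ 2)
      nlinarith [sq_nonneg (b' * r - e * a' * q / 2)]
    exact nonneg_of_mul_nonneg_right h1 hb'
  have h3 : e * a' * q * (a * p) ≤ e * a' * q * r :=
    mul_le_mul_of_nonneg_left hrp (by positivity)
  have h4 : r * (b' * r + a' * q) = b' * r ^ 2 + a' * q * (b * q + a * p) := by rw [← hr]; ring
  rw [h4]
  nlinarith

theorem cf_converges (a b : ℕ → ℝ) (ha : ∀ n, 0 < a (n + 1)) (hb : ∀ n, 0 < b n)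
    (c : ℝ) (hc : 0 < c)
    (h : ∀ m : ℕ, (c / ((m : ℝ) + 1)) ^ 2 * a (2 * m + 3) ≤ 4 * (b (2 * m + 3) * b (2 * m + 2))) :
    ∃ v, CFConvergesTo a b v ∧ 0 < v := by
  have hB : ∀ n, 0 < cfB a b (n + 1) := fun n => (cfB_pos a b ha hb n).1
  have hPi : ∀ n, 0 < ∏ i ∈ Finset.range (n + 1), a (i + 1) :=
    fun n => Finset.prod_pos fun i _ => ha i
  have hHpos : ∀ n, 0 < cfH a b n := fun n => div_pos (hPi n) (mul_pos (hB n) (hB (n + 1)))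
  have hBrec : ∀ k, cfB a b (k + 3) = b (k + 2) * cfB a b (k + 2) + a (k + 2) * cfB a b (k + 1) :=
    fun _ => rfl
  have hanti : Antitone (cfH a b) := by
    refine antitone_nat_of_succ_le fun n => ?_
    unfold cfH
    rw [Finset.prod_range_succ _ (n + 1)]
    rw [div_le_div_iff₀ (mul_pos (hB (n + 1)) (hB (n + 2))) (mul_pos (hB n) (hB (n + 1)))]
    have e := hBrec n
    have e1 : a (n + 2) * cfB a b (n + 1) ≤ cfB a b (n + 3) := by
      have := mul_pos (hb (n + 2)) (hB (n + 1)); rw [e]; linarith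
    have e2 := mul_le_mul_of_nonneg_left e1 (mul_pos (hPi n) (hB (n + 1))).le
    show (∏ i ∈ Finset.range (n + 1), a (i + 1)) * a (n + 2) * (cfB a b (n + 1) * cfB a b (n + 2)) ≤
      (∏ i ∈ Finset.range (n + 1), a (i + 1)) * (cfB a b (n + 2) * cfB a b (n + 3))
    linarith
  have hstep : ∀ m : ℕ, cfH a b (2 * (m + 1)) * (1 + c / ((m : ℝ) + 1)) ≤ cfH a b (2 * m) := by
    intro m
    have q := cf_quad (a (2 * m + 2)) (a (2 * m + 3)) (b (2 * m + 2)) (b (2 * m + 3))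
      (cfB a b (2 * m + 1)) (cfB a b (2 * m + 2)) (c / ((m : ℝ) + 1)) (ha _) (ha _) (hb _) (hb _)
      (hB _) (hB _) (by positivity) (h m)
    rw [← hBrec] at q
    have e : cfB a b (2 * m + 4) = b (2 * m + 3) * cfB a b (2 * m + 3) +
      a (2 * m + 3) * cfB a b (2 * m + 2) := rfl
    rw [← e] at q
    unfold cfH
    rw [show 2 * (m + 1) = 2 * m + 2 by ring, Finset.prod_range_succ _ (2 * m + 2),
      Finset.prod_range_succ _ (2 * m + 1), div_mul_eq_mul_div]
    rw [div_le_div_iff₀ (mul_pos (hB _) (hB _)) (mul_pos (hB _) (hB _))]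
    have e2 := mul_le_mul_of_nonneg_left q (hPi (2 * m)).le
    simp only [add_assoc, Nat.reduceAdd] at e2 ⊢
    linarith
  have hbound : ∀ m : ℕ, cfH a b (2 * m) *
      (1 + ∑ i ∈ Finset.range m, c * (1 / ((i : ℝ) + 1))) ≤ cfH a b 0 := by
    intro m
    induction m with
    | zero => simp
    | succ k ih =>
      rw [Finset.sum_range_succ]
      have hs : 0 ≤ ∑ i ∈ Finset.range k, c * (1 / ((i : ℝ) + 1)) :=
        Finset.sum_nonneg fun i _ => by positivity
      set S := ∑ i ∈ Finset.range k, c * (1 / ((i : ℝ) + 1))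
      have e1 := mul_le_mul_of_nonneg_right (hstep k) (by linarith : 0 ≤ 1 + S)
      have e2 : c * (1 / ((k : ℝ) + 1)) = c / ((k : ℝ) + 1) := by ring
      rw [e2]
      have e3 : 0 ≤ cfH a b (2 * (k + 1)) * (c / ((k : ℝ) + 1) * S) :=
        mul_nonneg (hHpos _).le (by positivity)
      linarith
  have hS : Tendsto (fun m : ℕ => 1 + ∑ i ∈ Finset.range m, c * (1 / ((i : ℝ) + 1))) atTop atTop := by
    refine tendsto_atTop_add_const_left _ _ ?_
    simp_rw [← Finset.mul_sum]
    exact Real.tendsto_sum_range_one_div_nat_succ_atTop.const_mul_atTop hc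
  have hE : Tendsto (fun m : ℕ => cfH a b (2 * m)) atTop (nhds 0) := by
    refine squeeze_zero (fun m => (hHpos _).le) (fun m => ?_)
      (hS.const_div_atTop (cfH a b 0))
    have hs : 0 ≤ ∑ i ∈ Finset.range m, c * (1 / ((i : ℝ) + 1)) :=
      Finset.sum_nonneg fun i _ => by positivity
    rw [le_div_iff₀ (by linarith)]
    exact hbound m
  have h0 : Tendsto (cfH a b) atTop (nhds 0) := by
    have hdiv : Tendsto (fun n : ℕ => n / 2) atTop atTop :=
      Nat.tendsto_div_const_atTop (by norm_num)
    refine squeeze_zero (fun m => (hHpos _).le) (fun m => ?_) (hE.comp hdiv)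
    exact hanti (Nat.mul_div_le m 2)
  obtain ⟨l, hl⟩ := hanti.tendsto_alternating_series_of_tendsto_zero h0
  have hf : ∀ n, cfA a b (n + 1) / cfB a b (n + 1) =
      b 0 + ∑ i ∈ Finset.range n, (-1) ^ i * cfH a b i := by
    intro n
    induction n with
    | zero => simp [cfA, cfB]
    | succ k ih =>
      rw [Finset.sum_range_succ, ← add_assoc, ← ih]
      unfold cfH
      rw [← mul_div_assoc, ← cf_det]
      have := (hB k).ne'
      have := (hB (k + 1)).ne'
      field_simp
      ring
  have hT : Tendsto (fun n => cfA a b n / cfB a b n) atTop (nhds (b 0 + l)) := by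
    rw [← tendsto_add_atTop_iff_nat 1]
    simp_rw [hf]
    exact hl.const_add _
  refine ⟨b 0 + l, ⟨?_, hT⟩, ?_⟩
  · filter_upwards [eventually_ge_atTop 1] with n hn
    obtain ⟨k, rfl⟩ := Nat.exists_eq_add_of_le' hn
    exact (hB k).ne'
  · refine lt_of_lt_of_le (hb 0) (ge_of_tendsto hT ?_)
    filter_upwards [eventually_ge_atTop 1] with n hn
    obtain ⟨k, rfl⟩ := Nat.exists_eq_add_of_le' hn
    rw [le_div_iff₀ (hB k)]
    exact (cfA_ge a b ha hb k).2

theorem aSeq_even (α β : ℝ) (m : ℕ) : aSeq α β (2 * m) =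
    (2 * (m : ℝ) - α - β) * (2 * (m : ℝ) - α) * (2 * (m : ℝ) - β) / 4 := by
  simp [aSeq]

theorem aSeq_odd (α β : ℝ) (m : ℕ) : aSeq α β (2 * m + 1) =
    (2 * (m : ℝ) + α + β) * (2 * (m : ℝ) + α) * (2 * (m : ℝ) + β) / 4 := by
  have : (2 * m + 1) % 2 ≠ 0 := by omega
  simp [aSeq, this]

theorem bSeq_even (α β y : ℝ) (m : ℕ) : bSeq α β y (2 * m + 2) = y := by
  have : (2 * m + 2) % 2 = 0 := by omega
  simp [bSeq]

theorem bSeq_odd (α β y : ℝ) (m : ℕ) : bSeq α β y (2 * m + 1) =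
    (2 * (m : ℝ) + 1) * (y + 2 * (1 - α - β)) := by
  have : (2 * m + 1) % 2 ≠ 0 := by omega
  simp [bSeq, this]

theorem aSeq_pos (α β : ℝ) (hα0 : 0 < α) (hα1 : α < 1) (hβ0 : 0 < β) (hβ1 : β < 1) (n : ℕ) :
    0 < aSeq α β (n + 1) := by
  obtain ⟨m, rfl | rfl⟩ := Nat.even_or_odd' n
  · rw [aSeq_odd]; positivity
  · rw [show 2 * m + 1 + 1 = 2 * (m + 1) by ring, aSeq_even]
    push_cast
    have hm : (0 : ℝ) ≤ m := Nat.cast_nonneg m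
    have h1 : 0 < 2 * ((m : ℝ) + 1) - α - β := by linarith
    have h2 : 0 < 2 * ((m : ℝ) + 1) - α := by linarith
    have h3 : 0 < 2 * ((m : ℝ) + 1) - β := by linarith
    positivity

theorem bSeq_pos (α β y : ℝ) (hα1 : α < 1) (hβ1 : β < 1) (hy : 2 < y) (n : ℕ) :
    0 < bSeq α β y n := by
  have h1 : 0 < y + 2 * (1 - α - β) := by linarith
  have h2 : 0 < y := by linarith
  unfold bSeq
  split_ifs with h h'
  · linarith
  · exact h2
  · have : (0 : ℝ) < n := by exact_mod_cast Nat.pos_of_ne_zero h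
    positivity

theorem F_converges (α β : ℝ) (hα0 : 0 < α) (hα1 : α < 1) (hβ0 : 0 < β) (hβ1 : β < 1)
    (y : ℝ) (hy : 2 < y) : ∃ v, CFConvergesTo (aSeq α β) (bSeq α β y) v ∧ 0 < v := by
  have hd : 0 < y + 2 * (1 - α - β) := by linarith
  set d := y + 2 * (1 - α - β) with hdd
  refine cf_converges _ _ (aSeq_pos α β hα0 hα1 hβ0 hβ1) (bSeq_pos α β y hα1 hβ1 hy)
    (min 1 d) (lt_min one_pos hd) fun m => ?_
  have hc0 : 0 < min 1 d := lt_min one_pos hd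
  have hc1 : min 1 d ≤ 1 := min_le_left _ _
  have hc2 : min 1 d ≤ d := min_le_right _ _
  set c := min 1 d
  have hcc : c ^ 2 ≤ d := by nlinarith
  rw [bSeq_even, show 2 * m + 3 = 2 * (m + 1) + 1 by ring, aSeq_odd, bSeq_odd, ← hdd]
  push_cast
  have hm : (0 : ℝ) ≤ m := Nat.cast_nonneg m
  set t : ℝ := (m : ℝ) + 1 with ht
  have ht1 : 1 ≤ t := by linarith
  rw [div_pow, div_mul_eq_mul_div, div_le_iff₀ (by positivity)]
  have b1 : (2 * t + α + β) * (2 * t + α) * (2 * t + β) ≤ (4 * t) * (2 * t + 1) * (3 * t) := by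
    gcongr <;> linarith
  calc c ^ 2 * ((2 * t + α + β) * (2 * t + α) * (2 * t + β) / 4)
      ≤ d * ((4 * t) * (2 * t + 1) * (3 * t) / 4) := by gcongr
    _ = (3 * ((2 * t + 1) * d * t ^ 2)) := by ring
    _ ≤ (4 * y) * ((2 * t + 1) * d * t ^ 2) := by gcongr; linarith
    _ = _ := by ring

noncomputable def tN (α β x : ℝ) : ℝ := (x + 2 - α - 2 * β) * x * (x + 2 - 2 * α - β)

noncomputable def tD (α β x : ℝ) : ℝ := (x + 2 - α) * (x + 2 - 2 * α - 2 * β) * (x + 2 - β)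

noncomputable def tC (α β x : ℝ) (n : ℕ) : ℝ :=
  if n % 2 = 0 then 4 * n * (x + 2 - 2 * α - 2 * β) else 4 * x

noncomputable def tP (α β x : ℝ) (n : ℕ) : ℝ :=
  if n % 2 = 0 then tN α β x + 2 * n * x * (x + 2 - 2 * α - 2 * β) + 2 * n ^ 2 * x
  else tD α β x + (x + 2 - 2 * α - 2 * β) * (2 * (n - 1) * (n + 1) + 2 * x * (n - 1))

theorem tC_even (α β x : ℝ) (m : ℕ) :
    tC α β x (2 * m) = 8 * m * (x + 2 - 2 * α - 2 * β) := by
  simp only [tC, Nat.mul_mod_right, if_true]; push_cast; ring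

theorem tC_odd (α β x : ℝ) (m : ℕ) : tC α β x (2 * m + 1) = 4 * x := by
  have : (2 * m + 1) % 2 ≠ 0 := by omega
  simp [tC]

theorem tP_even (α β x : ℝ) (m : ℕ) : tP α β x (2 * m) =
    tN α β x + 4 * m * x * (x + 2 - 2 * α - 2 * β) + 8 * m ^ 2 * x := by
  simp only [tP, Nat.mul_mod_right, if_true]; push_cast; ring

theorem tP_odd (α β x : ℝ) (m : ℕ) : tP α β x (2 * m + 1) =
    tD α β x + (x + 2 - 2 * α - 2 * β) * (8 * m * (m + 1) + 4 * x * m) := by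
  have : (2 * m + 1) % 2 ≠ 0 := by omega
  simp only [tP, this, if_false]; push_cast; ring

noncomputable def tE (α β x : ℝ) (n : ℕ) : ℝ :=
  tP α β x n - tC α β x n * (if n % 2 = 0 then x else n * (x + 2 * (1 - α - β)))

theorem tE_even (α β x : ℝ) (m : ℕ) : tE α β x (2 * m) =
    tP α β x (2 * m) - tC α β x (2 * m) * x := by
  simp only [tE, Nat.mul_mod_right, if_true]

theorem tE_odd (α β x : ℝ) (m : ℕ) : tE α β x (2 * m + 1) =
    tP α β x (2 * m + 1) - tC α β x (2 * m + 1) * ((2 * m + 1) * (x + 2 * (1 - α - β))) := by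
  have : (2 * m + 1) % 2 ≠ 0 := by omega
  simp only [tE, this, if_false]; push_cast; ring

theorem tE_succ (α β x : ℝ) (n : ℕ) :
    tE α β x (n + 1) + bSeq α β x (n + 1) * tC α β x (n + 1) = tP α β x (n + 1) := by
  obtain ⟨m, rfl | rfl⟩ := Nat.even_or_odd' n
  · rw [tE_odd, bSeq_odd]; ring
  · rw [bSeq_even, show 2 * m + 1 + 1 = 2 * (m + 1) by ring, tE_even]; ring

theorem tP_rec (α β x : ℝ) (n : ℕ) :
    tP α β x (n + 2) = bSeq α β (x + 2) (n + 1) * tC α β x (n + 1) + tE α β x n := by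
  obtain ⟨m, rfl | rfl⟩ := Nat.even_or_odd' n
  · rw [show 2 * m + 2 = 2 * (m + 1) by ring, tE_even, bSeq_odd, tP_even, tP_even, tC_odd, tC_even]
    push_cast; ring
  · rw [bSeq_even, show 2 * m + 1 + 2 = 2 * (m + 1) + 1 by ring,
      show 2 * m + 1 + 1 = 2 * (m + 1) by ring, tE_odd, tP_odd, tP_odd, tC_odd, tC_even]
    push_cast; ring

theorem tP_quad (α β x : ℝ) (n : ℕ) :
    bSeq α β x (n + 1) * tP α β x (n + 2) + aSeq α β (n + 2) * tC α β x (n + 2) =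
      bSeq α β (x + 2) (n + 1) * tP α β x (n + 1) + aSeq α β (n + 1) * tC α β x n := by
  obtain ⟨m, rfl | rfl⟩ := Nat.even_or_odd' n
  · rw [show 2 * m + 2 = 2 * (m + 1) by ring, bSeq_odd, bSeq_odd, tP_even, tP_odd, tC_even,
      tC_even, aSeq_even, aSeq_odd, tN, tD]
    push_cast; ring
  · rw [bSeq_even, bSeq_even, show 2 * m + 1 + 2 = 2 * (m + 1) + 1 by ring,
      show 2 * m + 1 + 1 = 2 * (m + 1) by ring, tP_even, tP_odd, tC_odd,
      tC_odd, aSeq_even, aSeq_odd, tN, tD]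
    push_cast; ring

/-- Contiguous relation between solutions of the recurrences for `x` and `x + 2`. -/
theorem contig (α β x K : ℝ) (X Y : ℕ → ℝ)
    (hX : ∀ n, X (n + 2) = bSeq α β x (n + 1) * X (n + 1) + aSeq α β (n + 1) * X n)
    (hY : ∀ n, Y (n + 2) = bSeq α β (x + 2) (n + 1) * Y (n + 1) + aSeq α β (n + 1) * Y n)
    (h0 : X 1 * tC α β x 0 + X 0 * tE α β x 0 = K * Y 0)
    (h1 : X 1 * tP α β x 1 + aSeq α β 1 * tC α β x 1 * X 0 = K * Y 1) (n : ℕ) :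
    X (n + 1) * tC α β x n + X n * tE α β x n = K * Y n ∧
    X (n + 1) * tP α β x (n + 1) + aSeq α β (n + 1) * tC α β x (n + 1) * X n = K * Y (n + 1) := by
  induction n with
  | zero => exact ⟨h0, h1⟩
  | succ k ih =>
    obtain ⟨i1, i2⟩ := ih
    have e1 := tP_rec α β x k
    have e2 := tP_quad α β x k
    have e3 := tE_succ α β x k
    have x1 := hX k
    have y1 := hY k
    simp only [add_assoc, Nat.reduceAdd]
    rw [x1, y1]
    constructor
    · linear_combination i2 + X (k + 1) * e3
    · linear_combination bSeq α β (x + 2) (k + 1) * i2 + aSeq α β (k + 1) * i1 +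
        X (k + 1) * e2 + aSeq α β (k + 1) * X k * e1

theorem mediant_tendsto (f g w : ℕ → ℝ) (v : ℝ) (hf : Tendsto f atTop (nhds v))
    (hg : Tendsto g atTop (nhds v)) (hw0 : ∀ n, 0 ≤ w n) (hw1 : ∀ n, w n ≤ 1) :
    Tendsto (fun n => f n + w n * (g n - f n)) atTop (nhds v) := by
  have h : Tendsto (fun n => g n - f n) atTop (nhds 0) := by simpa using hg.sub hf
  have h2 : Tendsto (fun n => w n * (g n - f n)) atTop (nhds 0) := by
    refine squeeze_zero_norm (fun n => ?_) (by simpa using h.norm)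
    rw [norm_mul]
    have : ‖w n‖ ≤ 1 := by rw [Real.norm_eq_abs, abs_of_nonneg (hw0 n)]; exact hw1 n
    exact mul_le_of_le_one_left (norm_nonneg _) this
  simpa using hf.add h2

theorem stmt18 (α β : ℝ) (hα0 : 0 < α) (hα1 : α < 1) (hβ0 : 0 < β) (hβ1 : β < 1)
    (x : ℝ) (hx : 2 < x) :
    ∃ F1 F2 : ℝ, CFConvergesTo (aSeq α β) (bSeq α β x) F1 ∧ 0 < F1 ∧
      CFConvergesTo (aSeq α β) (bSeq α β (x + 2)) F2 ∧ 0 < F2 ∧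
      F1 / F2 = (x + 2 - α - 2 * β) * x * (x + 2 - 2 * α - β) /
        ((x + 2 - α) * (x + 2 - 2 * α - 2 * β) * (x + 2 - β)) := by
  obtain ⟨F1, hF1, hp1⟩ := F_converges α β hα0 hα1 hβ0 hβ1 x hx
  obtain ⟨F2, hF2, hp2⟩ := F_converges α β hα0 hα1 hβ0 hβ1 (x + 2) (by linarith)
  refine ⟨F1, F2, hF1, hp1, hF2, hp2, ?_⟩
  have hx0 : 0 < x := by linarith
  have hc1 : 0 < x + 2 - 2 * α - 2 * β := by linarith
  have hN : 0 < tN α β x := by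
    have h1 : 0 < x + 2 - α - 2 * β := by linarith
    have h2 : 0 < x + 2 - 2 * α - β := by linarith
    unfold tN; positivity
  have hD : 0 < tD α β x := by
    have h1 : 0 < x + 2 - α := by linarith
    have h2 : 0 < x + 2 - β := by linarith
    unfold tD; positivity
  have hP : ∀ n, 0 < tP α β x n := by
    intro n
    obtain ⟨m, rfl | rfl⟩ := Nat.even_or_odd' n
    · rw [tP_even]; positivity
    · rw [tP_odd]; positivity
  have hC : ∀ n, 0 ≤ tC α β x n := by
    intro n
    obtain ⟨m, rfl | rfl⟩ := Nat.even_or_odd' n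
    · rw [tC_even]; positivity
    · rw [tC_odd]; positivity
  have ha := aSeq_pos α β hα0 hα1 hβ0 hβ1
  have hB : ∀ n, 0 < cfB (aSeq α β) (bSeq α β x) (n + 1) :=
    fun n => (cfB_pos _ _ ha (bSeq_pos α β x hα1 hβ1 hx) n).1
  have hB' : ∀ n, 0 < cfB (aSeq α β) (bSeq α β (x + 2)) (n + 1) :=
    fun n => (cfB_pos _ _ ha (bSeq_pos α β (x + 2) hα1 hβ1 (by linarith)) n).1
  have c0 : tC α β x 0 = 0 := by simpa using tC_even α β x 0
  have c1 : tC α β x 1 = 4 * x := by simpa using tC_odd α β x 0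
  have p0 : tP α β x 0 = tN α β x := by simpa using tP_even α β x 0
  have p1 : tP α β x 1 = tD α β x := by simpa using tP_odd α β x 0
  have e0 : tE α β x 0 = tN α β x := by have := tE_even α β x 0; simp only [mul_zero] at this; rw [this, c0, p0]; ring
  have a1 : aSeq α β 1 = (α + β) * α * β / 4 := by simpa using aSeq_odd α β 0
  have kA := contig α β x (tN α β x) (cfA (aSeq α β) (bSeq α β x))
    (cfA (aSeq α β) (bSeq α β (x + 2))) (fun _ => rfl) (fun _ => rfl)
    (by rw [c0, e0]; simp [cfA]) (by
      rw [p1, c1, a1]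
      simp only [cfA, bSeq, if_true, tN, tD]
      ring)
  have kB := contig α β x (tD α β x) (cfB (aSeq α β) (bSeq α β x))
    (cfB (aSeq α β) (bSeq α β (x + 2))) (fun _ => rfl) (fun _ => rfl)
    (by rw [c0, e0]; simp [cfB]) (by
      rw [p1, c1, a1]
      simp only [cfB]
      ring)
  set A := cfA (aSeq α β) (bSeq α β x)
  set B := cfB (aSeq α β) (bSeq α β x)
  set A' := cfA (aSeq α β) (bSeq α β (x + 2))
  set B' := cfB (aSeq α β) (bSeq α β (x + 2))
  let f : ℕ → ℝ := fun n => A n / B n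
  let w : ℕ → ℝ := fun n => aSeq α β (n + 2) * tC α β x (n + 2) * B (n + 1) /
    (tD α β x * B' (n + 2))
  have hpos : ∀ n, 0 ≤ aSeq α β (n + 2) * tC α β x (n + 2) * B (n + 1) := fun n =>
    mul_nonneg (mul_nonneg (ha (n + 1)).le (hC _)) (hB n).le
  have hm := mediant_tendsto (fun n => f (n + 2)) (fun n => f (n + 1)) w F1
    (hF1.2.comp (tendsto_add_atTop_nat 2)) (hF1.2.comp (tendsto_add_atTop_nat 1))
    (fun n => div_nonneg (hpos n) (mul_pos hD (hB' (n + 1))).le)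
    (fun n => by
      rw [div_le_one (mul_pos hD (hB' (n + 1)))]
      have h1 := (kB (n + 1)).2
      have h2 := mul_pos (hB (n + 1)) (hP (n + 2))
      simp only [add_assoc, Nat.reduceAdd] at h1 h2
      rw [← h1]; linarith)
  have hr : Tendsto (fun n => tN α β x / tD α β x * (A' (n + 2) / B' (n + 2))) atTop
      (nhds (tN α β x / tD α β x * F2)) :=
    (hF2.2.comp (tendsto_add_atTop_nat 2)).const_mul _
  have heq : (fun n => f (n + 2) + w n * (f (n + 1) - f (n + 2))) =
      fun n => tN α β x / tD α β x * (A' (n + 2) / B' (n + 2)) := by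
    funext n
    have h1 := (kB (n + 1)).2
    have h2 := (kA (n + 1)).2
    simp only [add_assoc, Nat.reduceAdd] at h1 h2
    have n1 := (hB n).ne'
    have n2 := (hB (n + 1)).ne'
    have n3 := (hB' (n + 1)).ne'
    have n4 := hD.ne'
    simp only [add_assoc, Nat.reduceAdd] at n2 n3
    simp only [f, w]
    field_simp
    linear_combination B (n + 2) * h2 - A (n + 2) * h1
  rw [heq] at hm
  have hfin := tendsto_nhds_unique hm hr
  rw [hfin, mul_div_assoc, div_self hp2.ne', mul_one, tN, tD]
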